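/- arXiv:2003.08009 — 3 statements merged into one kernel-verified Lean document; each statement's English description precedes it below -/
import Mathlib

section
/- (Exact distribution of the number of collisions) Let n and b be positive integers and consider the uniform probability measure on the set of all functions f : Fin n → Fin b. Define the number of collisions C(f) = n - |image f|. Then for every natural number c with n - c ≤ b, the probability that C(f) = c equals (b choose (n-c)) multiplied by the number of surjective functions from Fin n onto Fin (n-c), divided by b^n. -/
open MeasureTheory
open scoped ENNReal

/-- The functions with image `s` are as many as the surjections onto `Fin s.card`. -/
theorem card_filter_image_eq {α β : Type*} [Fintype α] [DecidableEq α] [Fintype β]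
    [DecidableEq β] {m : ℕ} (s : Finset β) (hs : s.card = m) :
    (Finset.univ.filter (fun f : α → β => Finset.univ.image f = s)).card =
      (Finset.univ.filter (fun g : α → Fin m => Function.Surjective g)).card := by
  let e : Fin m ≃ s := (s.equivFinOfCardEq hs).symm
  symm
  refine Finset.card_bij (fun g _ x => (e (g x) : β)) ?_ ?_ ?_
  · intro g hg
    have hg : Function.Surjective g := by simpa using hg
    simp only [Finset.mem_filter, Finset.mem_univ, true_and]
    ext y
    simp only [Finset.mem_image, Finset.mem_univ, true_and]
    constructor
    · rintro ⟨x, rfl⟩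
      exact (e (g x)).2
    · intro hy
      obtain ⟨x, hx⟩ := hg (e.symm ⟨y, hy⟩)
      exact ⟨x, by simp [hx]⟩
  · intro g _ g' _ h
    funext x
    exact e.injective (Subtype.ext (congrFun h x))
  · intro f hf
    have hf : Finset.univ.image f = s := by simpa using hf
    have hmem (x : α) : f x ∈ s := hf ▸ Finset.mem_image_of_mem f (Finset.mem_univ x)
    refine ⟨fun x => e.symm ⟨f x, hmem x⟩, ?_, by simp⟩
    simp only [Finset.mem_filter, Finset.mem_univ, true_and]
    intro i
    have hi : (e i : β) ∈ Finset.univ.image f := hf ▸ (e i).2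
    obtain ⟨x, -, hx⟩ := Finset.mem_image.mp hi
    exact ⟨x, by simp [hx]⟩

/-- The number of functions whose image has exactly `m` elements. -/
theorem card_filter_card_image_eq {α β : Type*} [Fintype α] [DecidableEq α] [Fintype β]
    [DecidableEq β] (m : ℕ) :
    (Finset.univ.filter (fun f : α → β => (Finset.univ.image f).card = m)).card =
      (Fintype.card β).choose m *
        (Finset.univ.filter (fun g : α → Fin m => Function.Surjective g)).card := by
  rw [Finset.card_eq_sum_card_fiberwise (f := fun f : α → β => Finset.univ.image f)
    (t := Finset.univ.powersetCard m) (fun f hf => by simpa using hf)]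
  rw [← Finset.card_univ (α := β), ← Finset.card_powersetCard, ← smul_eq_mul]
  refine Finset.sum_eq_card_nsmul fun s hs => ?_
  have hs : s.card = m := (Finset.mem_powersetCard.mp hs).2
  rw [← card_filter_image_eq s hs, Finset.filter_filter]
  congr 1
  refine Finset.filter_congr fun f _ => ?_
  constructor
  · exact fun h => h.2
  · exact fun h => ⟨h ▸ hs, h⟩

/-- (Exact distribution of the number of collisions) Under the uniform probability measure
on all functions `f : Fin n → Fin b` (`n, b` positive), with number of collisions
`C(f) = n - |image f|`, for every natural number `c` with `n - c ≤ b` the probability that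
`C(f) = c` equals `(b choose (n - c))` times the number of surjective functions from `Fin n`
onto `Fin (n - c)`, divided by `b^n`. -/
theorem stmt7 (n b : ℕ) (hn : 0 < n) (hb : 0 < b) [NeZero b] (c : ℕ) (hc : n - c ≤ b) :
    (((PMF.uniformOfFintype (Fin n → Fin b)).toMeasure
        {f | n - (Finset.univ.image f).card = c}).toReal)
      = (b.choose (n - c) *
          (Finset.univ.filter
            (fun g : Fin n → Fin (n - c) => Function.Surjective g)).card : ℝ)
        / (b : ℝ) ^ n := by
  have hset : {f : Fin n → Fin b | n - (Finset.univ.image f).card = c} =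
      ↑(Finset.univ.filter
        (fun f : Fin n → Fin b => (Finset.univ.image f).card = n - c)) := by
    ext f
    have hle : (Finset.univ.image f).card ≤ n := by
      simpa using Finset.card_image_le (s := Finset.univ) (f := f)
    have hpos : 0 < (Finset.univ.image f).card :=
      Finset.card_pos.mpr ⟨f ⟨0, hn⟩, Finset.mem_image_of_mem f (Finset.mem_univ _)⟩
    simp only [Set.mem_ofPred_eq, Finset.coe_filter, Finset.mem_univ, true_and]
    omega
  rw [hset, PMF.toMeasure_uniformOfFintype_apply _ (Set.toFinite _).measurableSet]
  simp [card_filter_card_image_eq]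
end

section
/- For a fixed positive integer n, the expected number of collisions g(b) = n - b·(1 - (1 - 1/b)^n) (viewed as a real-valued function of a real variable b ≥ 1) is a nonincreasing function of b; that is, for all real numbers 1 ≤ b₁ ≤ b₂, one has n - b₂·(1 - (1 - 1/b₂)^n) ≤ n - b₁·(1 - (1 - 1/b₁)^n). -/
/-- The expected number of occupied buckets is a geometric sum. -/
lemma mul_one_sub_pow_eq_geom_sum (n : ℕ) {b : ℝ} (hb : b ≠ 0) :
    b * (1 - (1 - 1 / b) ^ n) = ∑ i ∈ Finset.range n, (1 - 1 / b) ^ i := by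
  rw [← mul_neg_geom_sum, ← mul_assoc, sub_sub_cancel, mul_one_div_cancel hb, one_mul]

/-- For a fixed positive integer `n`, the expected number of collisions
`g(b) = n - b * (1 - (1 - 1/b)^n)`, as a real-valued function of a real variable `b ≥ 1`,
is nonincreasing in `b`. -/
theorem stmt8 (n : ℕ) (hn : 0 < n) (b₁ b₂ : ℝ) (hb₁ : 1 ≤ b₁) (hb : b₁ ≤ b₂) :
    (n : ℝ) - b₂ * (1 - (1 - 1 / b₂) ^ n) ≤ (n : ℝ) - b₁ * (1 - (1 - 1 / b₁) ^ n) := by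
  have h₁ : 0 < b₁ := by linarith
  have h₂ : 0 < b₂ := by linarith
  rw [mul_one_sub_pow_eq_geom_sum n h₁.ne', mul_one_sub_pow_eq_geom_sum n h₂.ne']
  have h_nonneg : 0 ≤ 1 - 1 / b₁ := sub_nonneg.2 ((div_le_one h₁).2 hb₁)
  gcongr
end

section
/- Let n be a positive integer, α a type with decidable equality, and f : Fin n → α. Let C = n - |image f| be the number of collisions of f, and let T be the number of indices i : Fin n such that the value f(i) is attained at least twice (the number of tied observations). If C ≥ 1, then C + 1 ≤ T ≤ 2·C; moreover C = 0 implies T = 0. -/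
section Ties

variable {ι α : Type*} [Fintype ι] [DecidableEq ι] [DecidableEq α]

/-- The indices whose value under `f` is attained at least twice. -/
def tiedIndices (f : ι → α) : Finset ι :=
  Finset.univ.filter fun i => ∃ j, j ≠ i ∧ f j = f i

theorem mem_tiedIndices {f : ι → α} {i : ι} :
    i ∈ tiedIndices f ↔ ∃ j, j ≠ i ∧ f j = f i := by
  simp [tiedIndices]

theorem injOn_compl_tiedIndices (f : ι → α) :
    Set.InjOn f ((tiedIndices f)ᶜ : Finset ι) := by
  intro i hi j _ hij
  by_contra hne
  exact Finset.mem_compl.mp hi (mem_tiedIndices.mpr ⟨j, Ne.symm hne, hij.symm⟩)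

theorem disjoint_image_tiedIndices_image_compl (f : ι → α) :
    Disjoint ((tiedIndices f).image f) ((tiedIndices f)ᶜ.image f) := by
  rw [Finset.disjoint_left]
  intro a ha hb
  obtain ⟨i, hi, rfl⟩ := Finset.mem_image.mp ha
  obtain ⟨j, hj, hji⟩ := Finset.mem_image.mp hb
  refine Finset.mem_compl.mp hj (mem_tiedIndices.mpr ⟨i, ?_, hji.symm⟩)
  rintro rfl
  exact Finset.mem_compl.mp hj hi

/-- Untied indices contribute equally to the domain and to the image. -/
theorem card_image_add_card_tiedIndices (f : ι → α) :
    (Finset.univ.image f).card + (tiedIndices f).card =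
      Fintype.card ι + ((tiedIndices f).image f).card := by
  have himage : (Finset.univ.image f).card =
      ((tiedIndices f).image f).card + (tiedIndices f)ᶜ.card := by
    rw [← Finset.union_compl (tiedIndices f), Finset.image_union,
      Finset.card_union_of_disjoint (disjoint_image_tiedIndices_image_compl f),
      Finset.card_image_of_injOn (injOn_compl_tiedIndices f)]
  have hcompl := Finset.card_add_card_compl (tiedIndices f)
  omega

/-- Every tied value is attained by at least two tied indices. -/
theorem two_mul_card_image_tiedIndices_le (f : ι → α) :
    2 * ((tiedIndices f).image f).card ≤ (tiedIndices f).card := by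
  refine Finset.mul_card_image_le_card _ 2 fun a ha => ?_
  obtain ⟨i, hi, rfl⟩ := Finset.mem_image.mp ha
  obtain ⟨j, hji, hf⟩ := mem_tiedIndices.mp hi
  refine Finset.one_lt_card.mpr ⟨i, by simp [hi], j, ?_, hji.symm⟩
  simp only [Finset.mem_filter, mem_tiedIndices]
  exact ⟨⟨i, hji.symm, hf.symm⟩, hf⟩

end Ties

/-- For `f : Fin n → α` (`n` positive, `α` with decidable equality), let
`C = n - |image f|` be the number of collisions of `f` and let `T` be the number of
indices `i : Fin n` whose value `f i` is attained at least twice (equivalently,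
`∃ j ≠ i, f j = f i`). If `C ≥ 1` then `C + 1 ≤ T ≤ 2 * C`; moreover `C = 0`
implies `T = 0`. -/
theorem stmt13 (n : ℕ) (hn : 0 < n) {α : Type*} [DecidableEq α] (f : Fin n → α)
    (C T : ℕ) (hC : C = n - (Finset.univ.image f).card)
    (hT : T = (Finset.univ.filter (fun i : Fin n => ∃ j : Fin n, j ≠ i ∧ f j = f i)).card) :
    (1 ≤ C → C + 1 ≤ T ∧ T ≤ 2 * C) ∧ (C = 0 → T = 0) := by
  replace hT : T = (tiedIndices f).card := by
    rw [hT]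
    congr 1
    ext i
    simp [mem_tiedIndices]
  have hcard := card_image_add_card_tiedIndices f
  have htwo := two_mul_card_image_tiedIndices_le f
  have hpos : 0 < (tiedIndices f).card → 0 < ((tiedIndices f).image f).card := fun h =>
    ((Finset.card_pos.mp h).image f).card_pos
  rw [Fintype.card_fin] at hcard
  omega
end
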